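/- arXiv:0706.3547 — 2 statements merged into one kernel-verified Lean document; each statement's English description precedes it below -/
import Mathlib

section
/- Let Λ be a k-graph and α an action of ℤ^l on Λ by automorphisms, and let Λ ×_α ℤ^l be the crossed-product (k+l)-graph. Then for all μ, ν ∈ Λ and m, n ∈ ℕ^l, the set of minimal common extensions of (μ,m) and (ν,n) in Λ ×_α ℤ^l equals MCE_Λ(μ,ν) × {m ∨ n}. -/
/-!
Since `α_m` is an automorphism, `(λ, p) = (μ, m)(a, q)` says exactly that `λ = μ · α_m(a)` with
`p = m + q`, and `α_m(a)` ranges over all morphisms composable with `μ`. Hence `(λ, p)` extends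
`(μ, m)` in the crossed product iff `λ` extends `μ` and `m ≤ p`
(`crossedProd_factorsThrough_iff`). The degree condition for minimality splits into
`d λ = d μ ⊔ d ν` and `p = m ⊔ n`, and the latter makes `m ≤ p` and `n ≤ p` automatic.
-/

/-- The underlying data of a higher-rank graph of rank `ι`: a set `M` of morphisms together
with a degree map into `ι → ℕ`, range and source maps (whose values are thought of as the
identity morphisms at the range/source object), and a (total) composition map, whose values
are only relevant on composable pairs. -/
structure KGraphStr (ι : Type) (M : Type) where
  d : M → ι → ℕ
  rng : M → M
  src : M → M
  comp : M → M → M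

namespace KGraphStr

variable {ι ι' M N : Type}

/-- `Λ` is a `k`-graph (of rank `ι`): a countable small category (objects identified with the
identity morphisms, which are the degree-`0` morphisms) together with a degree functor
satisfying the factorisation property. -/
structure IsKGraph (Λ : KGraphStr ι M) : Prop where
  countable : Countable M
  d_rng : ∀ μ, Λ.d (Λ.rng μ) = 0
  d_src : ∀ μ, Λ.d (Λ.src μ) = 0
  rng_rng : ∀ μ, Λ.rng (Λ.rng μ) = Λ.rng μ
  src_rng : ∀ μ, Λ.src (Λ.rng μ) = Λ.rng μ
  rng_src : ∀ μ, Λ.rng (Λ.src μ) = Λ.src μ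
  src_src : ∀ μ, Λ.src (Λ.src μ) = Λ.src μ
  id_comp : ∀ μ, Λ.comp (Λ.rng μ) μ = μ
  comp_id : ∀ μ, Λ.comp μ (Λ.src μ) = μ
  rng_comp : ∀ μ ν, Λ.src μ = Λ.rng ν → Λ.rng (Λ.comp μ ν) = Λ.rng μ
  src_comp : ∀ μ ν, Λ.src μ = Λ.rng ν → Λ.src (Λ.comp μ ν) = Λ.src ν
  d_comp : ∀ μ ν, Λ.src μ = Λ.rng ν → Λ.d (Λ.comp μ ν) = Λ.d μ + Λ.d ν
  comp_assoc : ∀ μ ν ξ, Λ.src μ = Λ.rng ν → Λ.src ν = Λ.rng ξ →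
      Λ.comp (Λ.comp μ ν) ξ = Λ.comp μ (Λ.comp ν ξ)
  factorisation : ∀ (lam : M) (m n : ι → ℕ), Λ.d lam = m + n →
      ∃! p : M × M, Λ.d p.1 = m ∧ Λ.d p.2 = n ∧ Λ.src p.1 = Λ.rng p.2 ∧
        Λ.comp p.1 p.2 = lam

/-- An action of `ℤ^l` on the rank-`ι` graph `Λ` by automorphisms: a group homomorphism
`m ↦ act m` from `ℤ^l` into the automorphisms of `Λ` (each `act m` is automatically bijective,
with inverse `act (-m)`, and is a degree-preserving functor). -/
structure ZlAction (l : ℕ) (Λ : KGraphStr ι M) where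
  act : (Fin l → ℤ) → M → M
  act_zero : ∀ μ, act 0 μ = μ
  act_add : ∀ m n μ, act (m + n) μ = act m (act n μ)
  map_d : ∀ m μ, Λ.d (act m μ) = Λ.d μ
  map_rng : ∀ m μ, Λ.rng (act m μ) = act m (Λ.rng μ)
  map_src : ∀ m μ, Λ.src (act m μ) = act m (Λ.src μ)
  map_comp : ∀ m μ ν, Λ.src μ = Λ.rng ν →
      act m (Λ.comp μ ν) = Λ.comp (act m μ) (act m ν)

/-- The canonical inclusion of `ℕ^l` in `ℤ^l`. -/
def natToInt {l : ℕ} (m : Fin l → ℕ) : Fin l → ℤ := fun i => (m i : ℤ)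

/-- The crossed-product `(k+l)`-graph `Λ ×_α ℤ^l`: morphisms `Λ × ℕ^l`, degree
`d(λ,m) = (d λ, m)`, range `r(λ,m) = (r λ, 0)`, source `s(λ,m) = (α_{-m}(s λ), 0)`, and
composition `(μ,m)(ν,n) = (μ·α_m(ν), m+n)`. -/
def crossedProd (Λ : KGraphStr ι M) {l : ℕ} (α : ZlAction l Λ) :
    KGraphStr (ι ⊕ Fin l) (M × (Fin l → ℕ)) where
  d := fun p => Sum.elim (Λ.d p.1) (fun i => p.2 i)
  rng := fun p => (Λ.rng p.1, 0)
  src := fun p => (α.act (-(natToInt p.2)) (Λ.src p.1), 0)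
  comp := fun p q => (Λ.comp p.1 (α.act (natToInt p.2) q.1), p.2 + q.2)

end KGraphStr

namespace KGraphStr

variable {ι M : Type}

/-- `lam` factors through `μ`, i.e. `lam = μ·a` for some morphism `a` composable with `μ`. -/
def factorsThrough (Λ : KGraphStr ι M) (μ lam : M) : Prop :=
  ∃ a, Λ.src μ = Λ.rng a ∧ Λ.comp μ a = lam

/-- The set of minimal common extensions of `μ` and `ν`: common extensions `lam = μa = νb`
of degree `d μ ⊔ d ν` (the coordinatewise maximum). -/
def MCE (Λ : KGraphStr ι M) (μ ν : M) : Set M :=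
  {lam | Λ.factorsThrough μ lam ∧ Λ.factorsThrough ν lam ∧ Λ.d lam = Λ.d μ ⊔ Λ.d ν}

/-- A rank-`ι` graph is finitely aligned if every pair of morphisms has only finitely many
(possibly none) minimal common extensions. -/
def FinitelyAligned (Λ : KGraphStr ι M) : Prop := ∀ μ ν, (Λ.MCE μ ν).Finite

end KGraphStr

open KGraphStr

theorem act_act_neg {ι M : Type} {l : ℕ} {Λ : KGraphStr ι M} (α : ZlAction l Λ)
    (m : Fin l → ℤ) (x : M) : α.act m (α.act (-m) x) = x := by
  rw [← α.act_add, add_neg_cancel, α.act_zero]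

theorem crossedProd_factorsThrough_iff {ι M : Type} {l : ℕ} {Λ : KGraphStr ι M}
    (α : ZlAction l Λ) (μ lam : M) (m p : Fin l → ℕ) :
    (crossedProd Λ α).factorsThrough (μ, m) (lam, p) ↔ Λ.factorsThrough μ lam ∧ m ≤ p := by
  constructor
  · rintro ⟨⟨a, q⟩, hs, hc⟩
    simp only [crossedProd, Prod.mk.injEq] at hs hc
    refine ⟨⟨α.act (natToInt m) a, ?_, hc.1⟩, hc.2 ▸ le_self_add⟩
    rw [α.map_rng, ← hs.1, act_act_neg]
  · rintro ⟨⟨a, hs, hc⟩, hmp⟩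
    refine ⟨(α.act (-(natToInt m)) a, p - m), ?_, ?_⟩
    · simp only [crossedProd, Prod.mk.injEq, and_true]
      rw [α.map_rng, hs]
    · simp only [crossedProd, Prod.mk.injEq]
      exact ⟨by rw [act_act_neg, hc], add_tsub_cancel_of_le hmp⟩

theorem crossedProd_d_eq_sup_iff {ι M : Type} {l : ℕ} {Λ : KGraphStr ι M}
    (α : ZlAction l Λ) (μ ν lam : M) (m n p : Fin l → ℕ) :
    (crossedProd Λ α).d (lam, p) = (crossedProd Λ α).d (μ, m) ⊔ (crossedProd Λ α).d (ν, n) ↔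
      Λ.d lam = Λ.d μ ⊔ Λ.d ν ∧ p = m ⊔ n := by
  simp [crossedProd, funext_iff]

theorem stmt1 {k l : ℕ} {M : Type} (Λ : KGraphStr (Fin k) M) (hΛ : Λ.IsKGraph)
    (α : ZlAction l Λ) (μ ν : M) (m n : Fin l → ℕ) :
    (crossedProd Λ α).MCE (μ, m) (ν, n) = (Λ.MCE μ ν) ×ˢ ({m ⊔ n} : Set (Fin l → ℕ)) := by
  ext ⟨lam, p⟩
  simp only [MCE, Set.mem_ofPred_eq, Set.mem_prod, Set.mem_singleton_iff,
    crossedProd_factorsThrough_iff, crossedProd_d_eq_sup_iff]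
  constructor
  · rintro ⟨⟨hμ, -⟩, ⟨hν, -⟩, hd, hp⟩
    exact ⟨⟨hμ, hν, hd⟩, hp⟩
  · rintro ⟨⟨hμ, hν, hd⟩, rfl⟩
    exact ⟨⟨hμ, le_sup_left⟩, ⟨hν, le_sup_right⟩, hd, rfl⟩
end

section
/- Let Λ be a row-finite k-graph with no sources and α an action of ℤ^l on Λ by automorphisms. Then there is a unique homeomorphism x ↦ (x,∞) from the infinite-path space Λ^∞ onto the infinite-path space (Λ ×_α ℤ^l)^∞ such that (x,∞)((0,0),(p,0)) = (x(0,p), 0) for all p ∈ ℕ^k, where both path spaces carry the topology generated by cylinder sets. -/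
namespace KGraphStr

variable {ι M : Type}

/-- The set `vΛ^p` of morphisms with range `v` and degree `p`. -/
def rngDegSet (Λ : KGraphStr ι M) (v : M) (p : ι → ℕ) : Set M :=
  {lam | Λ.rng lam = v ∧ Λ.d lam = p}

/-- The set `Λ^p v` of morphisms with source `v` and degree `p`. -/
def srcDegSet (Λ : KGraphStr ι M) (v : M) (p : ι → ℕ) : Set M :=
  {lam | Λ.src lam = v ∧ Λ.d lam = p}

/-- A rank-`ι` graph is row-finite if `vΛ^p` is finite for every vertex `v` (i.e. every
degree-zero morphism) and every `p`. -/
def RowFinite (Λ : KGraphStr ι M) : Prop :=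
  ∀ v, Λ.d v = 0 → ∀ p, (Λ.rngDegSet v p).Finite

/-- A rank-`ι` graph has no sources if `vΛ^p` is nonempty for every vertex `v` and every `p`. -/
def NoSources (Λ : KGraphStr ι M) : Prop :=
  ∀ v, Λ.d v = 0 → ∀ p, (Λ.rngDegSet v p).Nonempty

end KGraphStr

namespace KGraphStr

variable {ι M N : Type}

theorem pi_zero_le (f : ι → ℕ) : (0 : ι → ℕ) ≤ f := fun _ => Nat.zero_le _

/-- The morphisms of the rank-`ι` graph `Ω_ι`: pairs `(m,n)` with `m ≤ n` in `ℕ^ι`. -/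
def OmegaMor (ι : Type) : Type := {q : (ι → ℕ) × (ι → ℕ) // q.1 ≤ q.2}

/-- The rank-`ι` graph `Ω_ι` with morphisms `{(m,n) : m ≤ n}`, `r(m,n) = (m,m)`,
`s(m,n) = (n,n)`, `d(m,n) = n - m` and composition `(m,n)(n,p) = (m,p)`. -/
def Omega (ι : Type) : KGraphStr ι (OmegaMor ι) where
  d := fun q => q.1.2 - q.1.1
  rng := fun q => ⟨(q.1.1, q.1.1), le_rfl⟩
  src := fun q => ⟨(q.1.2, q.1.2), le_rfl⟩
  comp := fun q q' => ⟨(q.1.1, q.1.1 ⊔ q'.1.2), le_sup_left⟩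

/-- A morphism of rank-`ι` graphs (a degree-preserving functor). -/
structure IsKGraphHom (Γ : KGraphStr ι N) (Λ : KGraphStr ι M) (f : N → M) : Prop where
  map_d : ∀ x, Λ.d (f x) = Γ.d x
  map_rng : ∀ x, Λ.rng (f x) = f (Γ.rng x)
  map_src : ∀ x, Λ.src (f x) = f (Γ.src x)
  map_comp : ∀ x y, Γ.src x = Γ.rng y → f (Γ.comp x y) = Λ.comp (f x) (f y)

/-- An infinite path in `Λ`: a degree-preserving functor `x : Ω_ι → Λ`. -/
def InfPath (Λ : KGraphStr ι M) : Type :=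
  {x : OmegaMor ι → M // IsKGraphHom (Omega ι) Λ x}

/-- The vertex `x(n)` on an infinite path `x`. -/
def InfPath.vertex {Λ : KGraphStr ι M} (x : InfPath Λ) (n : ι → ℕ) : M :=
  x.1 ⟨(n, n), le_rfl⟩

/-- The cylinder set `λΛ^∞` of infinite paths whose initial segment of degree `d λ`
is `λ`. -/
def cylinder (Λ : KGraphStr ι M) (lam : M) : Set (InfPath Λ) :=
  {x | x.1 ⟨(0, Λ.d lam), pi_zero_le _⟩ = lam}

/-- The topology on the infinite-path space generated by the cylinder sets. -/
def pathTopology (Λ : KGraphStr ι M) : TopologicalSpace (InfPath Λ) :=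
  TopologicalSpace.generateFrom {S | ∃ lam, S = Λ.cylinder lam}

end KGraphStr

namespace KGraphStr

variable {ι M N : Type}

/-- The morphism `(m, n)` of `Ω_ι`. -/
def omegaMk (m n : ι → ℕ) (h : m ≤ n) : OmegaMor ι := ⟨(m, n), h⟩

/-! ### Segments of infinite paths -/

section Path

variable {Λ : KGraphStr ι M} (x : InfPath Λ)

/-- The segment `x(m, n)` of an infinite path. -/
def InfPath.seg (m n : ι → ℕ) (h : m ≤ n) : M := x.1 (omegaMk m n h)

theorem InfPath.d_seg (m n : ι → ℕ) (h : m ≤ n) : Λ.d (x.seg m n h) = n - m :=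
  x.2.map_d _

theorem InfPath.rng_seg (m n : ι → ℕ) (h : m ≤ n) :
    Λ.rng (x.seg m n h) = x.seg m m le_rfl :=
  x.2.map_rng _

theorem InfPath.src_seg (m n : ι → ℕ) (h : m ≤ n) :
    Λ.src (x.seg m n h) = x.seg n n le_rfl :=
  x.2.map_src _

theorem omega_comp (m n p : ι → ℕ) (h : m ≤ n) (h' : n ≤ p) :
    (Omega ι).comp (omegaMk m n h) (omegaMk n p h') = omegaMk m p (h.trans h') :=
  Subtype.ext (Prod.ext rfl (sup_eq_right.mpr (h.trans h')))

theorem InfPath.comp_seg (m n p : ι → ℕ) (h : m ≤ n) (h' : n ≤ p) :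
    Λ.comp (x.seg m n h) (x.seg n p h') = x.seg m p (h.trans h') := by
  have := x.2.map_comp (omegaMk m n h) (omegaMk n p h') rfl
  rw [omega_comp] at this
  exact this.symm

theorem InfPath.ext_seg {x y : InfPath Λ}
    (h : ∀ m n hmn, x.seg m n hmn = y.seg m n hmn) : x = y :=
  Subtype.ext (funext fun q => h q.1.1 q.1.2 q.2)

/-- An infinite path is built from a family of segments that satisfies the functor axioms. -/
def InfPath.mk (f : ∀ m n : ι → ℕ, m ≤ n → M)
    (hd : ∀ m n h, Λ.d (f m n h) = n - m)
    (hr : ∀ m n h, Λ.rng (f m n h) = f m m le_rfl)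
    (hs : ∀ m n h, Λ.src (f m n h) = f n n le_rfl)
    (hc : ∀ m n p h h', Λ.comp (f m n h) (f n p h') = f m p (h.trans h')) : InfPath Λ :=
  ⟨fun q => f q.1.1 q.1.2 q.2, by
    refine ⟨fun q => hd _ _ _, fun q => hr _ _ _, fun q => hs _ _ _, ?_⟩
    rintro ⟨⟨m, n⟩, h⟩ ⟨⟨n', p⟩, h'⟩ e
    have e' : n = n' := congrArg (fun q : OmegaMor ι => q.1.1) e
    subst e'
    change f _ ((Omega ι).comp (omegaMk m n h) (omegaMk n p h')).1.2
      ((Omega ι).comp (omegaMk m n h) (omegaMk n p h')).2 = _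
    rw [hc]
    congr 1
    exact sup_eq_right.mpr (le_trans h h')⟩

/-- Uniqueness in the factorisation property: `x(0, n) = x(0, m) x(m, n)` determines
`x(m, n)`, so the initial segments of a path determine the path. -/
theorem InfPath.ext_initial (hΛ : Λ.IsKGraph) {x y : InfPath Λ}
    (h : ∀ n, x.seg 0 n (pi_zero_le _) = y.seg 0 n (pi_zero_le _)) : x = y := by
  refine InfPath.ext_seg fun m n hmn => ?_
  have hfac := hΛ.factorisation (x.seg 0 n (pi_zero_le _)) m (n - m) (by
    rw [x.d_seg, tsub_zero, add_tsub_cancel_of_le hmn])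
  have key : ∀ z : InfPath Λ, z.seg 0 n (pi_zero_le _) = x.seg 0 n (pi_zero_le _) →
      Λ.d (z.seg 0 m (pi_zero_le _)) = m ∧ Λ.d (z.seg m n hmn) = n - m ∧
      Λ.src (z.seg 0 m (pi_zero_le _)) = Λ.rng (z.seg m n hmn) ∧
      Λ.comp (z.seg 0 m (pi_zero_le _)) (z.seg m n hmn) = x.seg 0 n (pi_zero_le _) := by
    intro z hz
    refine ⟨by rw [z.d_seg, tsub_zero], z.d_seg _ _ _, ?_, ?_⟩
    · rw [z.src_seg, z.rng_seg]
    · rw [z.comp_seg, hz]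
  exact congrArg Prod.snd (hfac.unique
    (y₁ := (x.seg 0 m (pi_zero_le _), x.seg m n hmn))
    (y₂ := (y.seg 0 m (pi_zero_le _), y.seg m n hmn)) (key x rfl) (key y (h n).symm))

end Path

/-- A morphism `v` of degree zero is an identity: `v = r(v) v = v s(v)` are two
factorisations of `v` of type `0 + 0`. -/
theorem IsKGraph.rng_eq_of_d_eq_zero {Λ : KGraphStr ι M} (hΛ : Λ.IsKGraph) {v : M}
    (hv : Λ.d v = 0) : Λ.rng v = v :=
  congrArg Prod.fst ((hΛ.factorisation v 0 0 (by rw [hv, add_zero])).unique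
    (y₁ := (Λ.rng v, v)) (y₂ := (v, Λ.src v))
    ⟨hΛ.d_rng v, hv, hΛ.src_rng v, hΛ.id_comp v⟩
    ⟨hv, hΛ.d_src v, (hΛ.rng_src v).symm, hΛ.comp_id v⟩)

/-! ### Paths in the crossed product -/

section CrossedProduct

variable {l : ℕ}

theorem natToInt_zero : natToInt (0 : Fin l → ℕ) = 0 := by
  funext i; simp [natToInt]

theorem natToInt_sub {m n : Fin l → ℕ} (h : m ≤ n) :
    natToInt (n - m) = natToInt n - natToInt m := by
  funext i; simp [natToInt, Nat.cast_sub (h i)]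

variable {Λ : KGraphStr ι M} (α : ZlAction l Λ)

theorem ZlAction.act_act (a b : Fin l → ℤ) {c : Fin l → ℤ} (h : a + b = c) (μ : M) :
    α.act a (α.act b μ) = α.act c μ := by
  rw [← α.act_add, h]

theorem inl_mono {m n : ι ⊕ Fin l → ℕ} (h : m ≤ n) : m ∘ Sum.inl ≤ n ∘ Sum.inl :=
  fun i => h (Sum.inl i)

theorem inr_mono {m n : ι ⊕ Fin l → ℕ} (h : m ≤ n) : m ∘ Sum.inr ≤ n ∘ Sum.inr :=
  fun i => h (Sum.inr i)

theorem elim_mono {p p' : ι → ℕ} {q q' : Fin l → ℕ} (h : p ≤ p') (h' : q ≤ q') :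
    (Sum.elim p q : ι ⊕ Fin l → ℕ) ≤ Sum.elim p' q' := by
  rintro (i | i)
  exacts [h i, h' i]

/-- The path `(x, ∞)`, whose segment from `(p, q)` to `(p', q')` is
`(α_{-q}(x(p, p')), q' - q)`. -/
def extend (x : InfPath Λ) : InfPath (crossedProd Λ α) :=
  InfPath.mk
    (fun m n h => (α.act (-natToInt (m ∘ Sum.inr)) (x.seg (m ∘ Sum.inl) (n ∘ Sum.inl)
      (inl_mono h)), n ∘ Sum.inr - m ∘ Sum.inr))
    (by
      intro m n h
      funext i
      cases i with
      | inl i => exact congrFun ((α.map_d _ _).trans (x.d_seg _ _ _)) i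
      | inr i => rfl)
    (by
      intro m n h
      refine Prod.ext ?_ (tsub_self _).symm
      exact (α.map_rng _ _).trans (congrArg _ (x.rng_seg _ _ _)))
    (by
      intro m n h
      refine Prod.ext ?_ (tsub_self _).symm
      change α.act (-natToInt (n ∘ Sum.inr - m ∘ Sum.inr)) (Λ.src (α.act _ _)) = _
      rw [α.map_src, x.src_seg, natToInt_sub (inr_mono h)]
      exact α.act_act _ _ (by abel) _)
    (by
      intro m n p h h'
      refine Prod.ext ?_ ?_
      · change Λ.comp (α.act _ _)
          (α.act (natToInt (n ∘ Sum.inr - m ∘ Sum.inr)) (α.act _ _)) = α.act _ _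
        rw [natToInt_sub (inr_mono h), α.act_act _ _ (c := -natToInt (m ∘ Sum.inr)) (by abel),
          ← α.map_comp, x.comp_seg]
        rw [x.src_seg, x.rng_seg]
      · funext i
        have h1 : m (Sum.inr i) ≤ n (Sum.inr i) := h _
        have h2 : n (Sum.inr i) ≤ p (Sum.inr i) := h' _
        change (n (Sum.inr i) - m (Sum.inr i)) + (p (Sum.inr i) - n (Sum.inr i))
          = p (Sum.inr i) - m (Sum.inr i)
        omega)

theorem extend_seg (x : InfPath Λ) (m n : ι ⊕ Fin l → ℕ) (h : m ≤ n) :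
    (extend α x).seg m n h = (α.act (-natToInt (m ∘ Sum.inr)) (x.seg (m ∘ Sum.inl) (n ∘ Sum.inl)
      (inl_mono h)), n ∘ Sum.inr - m ∘ Sum.inr) := rfl

theorem extend_seg_zero (x : InfPath Λ) (n : ι ⊕ Fin l → ℕ) :
    (extend α x).seg 0 n (pi_zero_le _)
      = (x.seg 0 (n ∘ Sum.inl) (pi_zero_le _), n ∘ Sum.inr) := by
  rw [extend_seg]
  refine Prod.ext ?_ (tsub_zero _)
  change α.act (-natToInt (0 : Fin l → ℕ)) (x.seg 0 _ _) = _
  rw [natToInt_zero, neg_zero, α.act_zero]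

variable {α}

theorem seg_snd (y : InfPath (crossedProd Λ α)) (m n : ι ⊕ Fin l → ℕ) (h : m ≤ n) :
    (y.seg m n h).2 = n ∘ Sum.inr - m ∘ Sum.inr := by
  funext i
  exact congrFun (y.d_seg m n h) (Sum.inr i)

theorem d_seg_fst (y : InfPath (crossedProd Λ α)) (m n : ι ⊕ Fin l → ℕ) (h : m ≤ n) :
    Λ.d (y.seg m n h).1 = n ∘ Sum.inl - m ∘ Sum.inl := by
  funext i
  exact congrFun (y.d_seg m n h) (Sum.inl i)

/-- The restriction of a path in the crossed product to `Ω_ι × {0}`, viewed as a path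
in `Λ`. -/
def restrict (y : InfPath (crossedProd Λ α)) : InfPath Λ :=
  InfPath.mk
    (fun m n h => (y.seg (Sum.elim m 0) (Sum.elim n 0) (elim_mono h le_rfl)).1)
    (by
      intro m n h
      exact d_seg_fst y _ _ _)
    (by
      intro m n h
      exact congrArg Prod.fst (y.rng_seg _ _ _))
    (by
      intro m n h
      have := congrArg Prod.fst (y.src_seg _ _ (elim_mono h (le_refl (0 : Fin l → ℕ))))
      change α.act (-natToInt (y.seg _ _ _).2) (Λ.src _) = _ at this
      rw [seg_snd, Sum.elim_comp_inr, Sum.elim_comp_inr, tsub_zero, natToInt_zero, neg_zero,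
        α.act_zero] at this
      exact this)
    (by
      intro m n p h h'
      have := congrArg Prod.fst (y.comp_seg _ _ _ (elim_mono h (le_refl (0 : Fin l → ℕ)))
        (elim_mono h' (le_refl (0 : Fin l → ℕ))))
      change Λ.comp _ (α.act (natToInt (y.seg _ _ _).2) _) = _ at this
      rw [seg_snd, Sum.elim_comp_inr, Sum.elim_comp_inr, tsub_zero, natToInt_zero,
        α.act_zero] at this
      exact this)

theorem restrict_seg (y : InfPath (crossedProd Λ α)) (m n : ι → ℕ) (h : m ≤ n) :
    (restrict y).seg m n h
      = (y.seg (Sum.elim m 0) (Sum.elim n 0) (elim_mono h le_rfl)).1 := rfl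

theorem restrict_extend (x : InfPath Λ) : restrict (extend α x) = x := by
  refine InfPath.ext_seg fun m n h => ?_
  rw [restrict_seg, extend_seg]
  change α.act (-natToInt (0 : Fin l → ℕ)) (x.seg m n _) = _
  rw [natToInt_zero, neg_zero, α.act_zero]

/-- The vertical segment from `(p, 0)` to `(p, q)` has an identity of `Λ` as its
first component. -/
theorem vertical_fst (hΛ : Λ.IsKGraph) (y : InfPath (crossedProd Λ α)) (p : ι → ℕ)
    (q : Fin l → ℕ) :
    (y.seg (Sum.elim p 0) (Sum.elim p q) (elim_mono le_rfl (pi_zero_le _))).1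
      = (restrict y).seg p p le_rfl := by
  have hd : Λ.d (y.seg (Sum.elim p 0) (Sum.elim p q) (elim_mono le_rfl (pi_zero_le _))).1 = 0 :=
    (d_seg_fst y _ _ _).trans (tsub_self _)
  exact (hΛ.rng_eq_of_d_eq_zero hd).symm.trans (congrArg Prod.fst (y.rng_seg _ _ _))

/-- Comparison around a rectangle: the two factorisations of the segment from `(p, 0)` to `(p', q')`, through `(p', 0)` and
through `(p, q)`, have first components `y((p, 0), (p', 0))` and `α_q(y((p, q), (p', q')))`
up to identities. -/
theorem act_seg_fst (hΛ : Λ.IsKGraph) (y : InfPath (crossedProd Λ α)) (p p' : ι → ℕ)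
    (q q' : Fin l → ℕ) (h : p ≤ p') (h' : q ≤ q') :
    α.act (natToInt q) (y.seg (Sum.elim p q) (Sum.elim p' q') (elim_mono h h')).1
      = (restrict y).seg p p' h := by
  have e1 := congrArg Prod.fst (y.comp_seg _ _ _ (elim_mono h (le_refl (0 : Fin l → ℕ)))
    (elim_mono (le_refl p') (pi_zero_le q')))
  have e2 := congrArg Prod.fst (y.comp_seg _ _ _ (elim_mono (le_refl p) (pi_zero_le q))
    (elim_mono h h'))
  change Λ.comp _ (α.act (natToInt (y.seg _ _ _).2) _) = _ at e1 e2
  rw [seg_snd, Sum.elim_comp_inr, Sum.elim_comp_inr, tsub_zero] at e1 e2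
  rw [natToInt_zero, α.act_zero, vertical_fst hΛ, ← restrict_seg y p p' h,
    ← (restrict y).src_seg p p' h, hΛ.comp_id] at e1
  have hc := congrArg Prod.fst ((y.src_seg _ _ (elim_mono (le_refl p) (pi_zero_le q))).trans
    (y.rng_seg _ _ (elim_mono h h')).symm)
  change α.act (-natToInt (y.seg _ _ _).2) (Λ.src _) = Λ.rng _ at hc
  rw [seg_snd, Sum.elim_comp_inr, Sum.elim_comp_inr, tsub_zero, vertical_fst hΛ,
    (restrict y).src_seg] at hc
  have hc' := congrArg (α.act (natToInt q)) hc
  rw [α.act_act _ _ (add_neg_cancel _), α.act_zero, ← α.map_rng] at hc'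
  rw [vertical_fst hΛ, hc', hΛ.id_comp] at e2
  exact e2.trans e1.symm

theorem extend_restrict (hΛ : Λ.IsKGraph) (y : InfPath (crossedProd Λ α)) :
    extend α (restrict y) = y := by
  refine InfPath.ext_seg fun m n h => ?_
  obtain ⟨p, q, rfl⟩ : ∃ p q, m = Sum.elim p q := ⟨_, _, (Sum.elim_comp_inl_inr m).symm⟩
  obtain ⟨p', q', rfl⟩ : ∃ p q, n = Sum.elim p q := ⟨_, _, (Sum.elim_comp_inl_inr n).symm⟩
  rw [extend_seg]
  refine Prod.ext ?_ (seg_snd y _ _ _).symm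
  have hp : p ≤ p' := inl_mono h
  have hq : q ≤ q' := inr_mono h
  change α.act (-natToInt q) ((restrict y).seg p p' hp) = _
  rw [← act_seg_fst hΛ y p p' q q' hp hq, α.act_act _ _ (neg_add_cancel _), α.act_zero]

/-! ### Cylinder sets -/

theorem extend_preimage_cylinder (lam : M) (q : Fin l → ℕ) :
    extend α ⁻¹' (crossedProd Λ α).cylinder (lam, q) = Λ.cylinder lam := by
  ext x
  change (extend α x).seg 0 (Sum.elim (Λ.d lam) q) (pi_zero_le _) = (lam, q)
    ↔ x.seg 0 (Λ.d lam) (pi_zero_le _) = lam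
  rw [extend_seg_zero]
  exact ⟨fun h => congrArg Prod.fst h, fun h => Prod.ext h rfl⟩

theorem restrict_seg_zero (y : InfPath (crossedProd Λ α)) (p : ι → ℕ) :
    (restrict y).seg 0 p (pi_zero_le _) = (y.seg 0 (Sum.elim p 0) (pi_zero_le _)).1 := by
  have h0 : (Sum.elim 0 0 : ι ⊕ Fin l → ℕ) = 0 := Sum.elim_zero_zero
  rw [restrict_seg]
  congr 2

theorem restrict_preimage_cylinder (lam : M) :
    restrict ⁻¹' Λ.cylinder lam = (crossedProd Λ α).cylinder (lam, 0) := by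
  ext y
  have hs : (y.seg 0 (Sum.elim (Λ.d lam) 0) (pi_zero_le _)).2 = 0 :=
    (seg_snd y _ _ _).trans (tsub_zero _)
  change (restrict y).seg 0 (Λ.d lam) (pi_zero_le _) = lam
    ↔ y.seg 0 (Sum.elim (Λ.d lam) 0) (pi_zero_le _) = (lam, 0)
  rw [restrict_seg_zero]
  exact ⟨fun h => Prod.ext h hs, fun h => congrArg Prod.fst h⟩

end CrossedProduct

end KGraphStr

open KGraphStr

theorem stmt5 {k l : ℕ} {M : Type} (Λ : KGraphStr (Fin k) M) (hΛ : Λ.IsKGraph)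
    (hrf : RowFinite Λ) (hns : NoSources Λ) (α : ZlAction l Λ) :
    letI : TopologicalSpace (InfPath Λ) := pathTopology Λ
    letI : TopologicalSpace (InfPath (crossedProd Λ α)) := pathTopology (crossedProd Λ α)
    ∃! Φ : InfPath Λ ≃ₜ InfPath (crossedProd Λ α),
      ∀ (x : InfPath Λ) (p : Fin k → ℕ),
        (Φ x).1 ⟨(0, Sum.elim p 0), pi_zero_le _⟩
          = (x.1 ⟨(0, p), pi_zero_le _⟩, 0) := by
  let _ : TopologicalSpace (InfPath Λ) := pathTopology Λ
  let _ : TopologicalSpace (InfPath (crossedProd Λ α)) := pathTopology (crossedProd Λ α)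
  have hext : Continuous (extend α : InfPath Λ → InfPath (crossedProd Λ α)) := by
    refine continuous_generateFrom_iff.mpr ?_
    rintro _ ⟨⟨lam, q⟩, rfl⟩
    rw [extend_preimage_cylinder]
    exact TopologicalSpace.isOpen_generateFrom_of_mem ⟨lam, rfl⟩
  have hres : Continuous (restrict : InfPath (crossedProd Λ α) → InfPath Λ) := by
    refine continuous_generateFrom_iff.mpr ?_
    rintro _ ⟨lam, rfl⟩
    rw [restrict_preimage_cylinder]
    exact TopologicalSpace.isOpen_generateFrom_of_mem ⟨(lam, 0), rfl⟩
  refine ⟨⟨⟨extend α, restrict, restrict_extend, extend_restrict hΛ⟩, hext, hres⟩,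
    fun x p => extend_seg_zero α x (Sum.elim p 0), ?_⟩
  intro Φ hΦ
  refine Homeomorph.ext fun x => ?_
  have hx : restrict (Φ x) = x := InfPath.ext_initial hΛ fun p =>
    (restrict_seg_zero (Φ x) p).trans (congrArg Prod.fst (hΦ x p))
  rw [← extend_restrict hΛ (Φ x), hx]
  rfl
end
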